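/- Suppose that for some R_0 ≥ 1 and c_2 > 0 one has Σ_{x,y∈V_1 : ρ(0,x) ≤ R, y ≠ x, ρ(x,y) ≤ r} W(x,y) ≤ c_2·r^d·R^d for every real R > R_0 and every real 1 ≤ r ≤ R. Then there exists a constant C, depending only on c_2, d and α, such that for every N > 0, every η with 0 < 2η < N, and every integer n ≥ 1 with n·N > R_0 and n·η ≥ 1: Σ_{x,y∈V_1 : ρ(0,x) ≤ nN, y ≠ x, ρ(x,y) ≤ nη} W(x,y)·ρ(x,y)^{−(d+α−2)} ≤ C·n^{d+2−α}·N^d·η^{2−α}. -/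

import Mathlib

open scoped ENNReal
open Classical

/-!
With `p = 2 - d - α` and `s = n η`, the sum `∑ W(x,y) ρ(x,y)^p` is the integral of `t ^ p` over
`[1, s]` against the push-forward `ν` of the weights under `ρ`, and the hypothesis says that
`ν [1, r] ≤ K r ^ d` with `K = c₂ (n N) ^ d`. Cut `[1, s]` into the dyadic shells
`(s / 2 ^ (k + 1), s / 2 ^ k]`. On each of them `t ^ p ≤ 2 ^ |p| (s / 2 ^ k) ^ p`, so the shell
contributes at most `2 ^ |p| K (s / 2 ^ k) ^ (d + p)`, and since `d + p > 0` these bounds form a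
convergent geometric series.
-/

open MeasureTheory Set

theorem rpow_le_rpow_abs_mul_rpow {c t r : ℝ} (p : ℝ) (hc : 1 ≤ c) (ht : 0 < t) (htr : t ≤ r)
    (hrt : r ≤ c * t) : t ^ p ≤ c ^ |p| * r ^ p := by
  have hr : 0 < r := ht.trans_le htr
  have hc0 : 0 < c := one_pos.trans_le hc
  rcases le_total 0 p with hp | hp
  · calc t ^ p ≤ r ^ p := Real.rpow_le_rpow ht.le htr hp
      _ ≤ c ^ |p| * r ^ p :=
        le_mul_of_one_le_left (by positivity) (Real.one_le_rpow hc (abs_nonneg p))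
  · calc t ^ p ≤ (r / c) ^ p :=
        Real.rpow_le_rpow_of_nonpos (by positivity) ((div_le_iff₀' hc0).2 hrt) hp
      _ = c ^ |p| * r ^ p := by
        rw [Real.div_rpow hr.le hc0.le, abs_of_nonpos hp, Real.rpow_neg hc0.le, div_eq_inv_mul]

theorem exists_nat_le_div_pow_lt_mul {b t s : ℝ} (hb : 1 < b) (ht : 0 < t) (hts : t ≤ s) :
    ∃ k : ℕ, t ≤ s / b ^ k ∧ s / b ^ k < b * t := by
  obtain ⟨k, hk_le, hk_lt⟩ := exists_nat_pow_near ((one_le_div ht).2 hts) hb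
  have hbk : 0 < b ^ k := pow_pos (one_pos.trans hb) k
  refine ⟨k, (le_div_comm₀ ht hbk).2 hk_le, (div_lt_iff₀ hbk).2 ?_⟩
  calc s < b ^ (k + 1) * t := (div_lt_iff₀ ht).1 hk_lt
    _ = b * t * b ^ k := by ring

theorem ofReal_rpow_le_tsum_indicator_Icc {a s t : ℝ} (p : ℝ) (ha : 0 < a) (ht : t ∈ Icc a s) :
    ENNReal.ofReal (t ^ p) ≤ ∑' k : ℕ, (Icc a (s / 2 ^ k)).indicator
      (fun _ ↦ ENNReal.ofReal (2 ^ |p| * (s / 2 ^ k) ^ p)) t := by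
  have ht0 : 0 < t := ha.trans_le ht.1
  obtain ⟨k, hk_le, hk_lt⟩ := exists_nat_le_div_pow_lt_mul one_lt_two ht0 ht.2
  refine le_trans ?_ (ENNReal.le_tsum k)
  rw [indicator_of_mem (mem_Icc.2 ⟨ht.1, hk_le⟩)]
  exact ENNReal.ofReal_le_ofReal
    (rpow_le_rpow_abs_mul_rpow p one_le_two ht0 hk_le hk_lt.le)

theorem tsum_ofReal_div_two_pow_rpow {s e : ℝ} (hs : 0 ≤ s) (he : 0 < e) :
    ∑' k : ℕ, ENNReal.ofReal ((s / 2 ^ k) ^ e) = ENNReal.ofReal (s ^ e / (1 - 2 ^ (-e))) := by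
  have hterm (k : ℕ) : (s / 2 ^ k) ^ e = s ^ e * ((2 : ℝ) ^ (-e)) ^ k := by
    rw [Real.div_rpow hs (by positivity), Real.rpow_neg zero_le_two, inv_pow,
      Real.rpow_pow_comm zero_le_two, div_eq_mul_inv]
  have hratio : (2 : ℝ) ^ (-e) < 1 :=
    Real.rpow_lt_one_of_one_lt_of_neg one_lt_two (neg_lt_zero.2 he)
  have hgeom := (hasSum_geometric_of_lt_one (by positivity) hratio).mul_left (s ^ e)
  simp_rw [hterm]
  rw [← ENNReal.ofReal_tsum_of_nonneg (fun k ↦ by positivity) hgeom.summable, hgeom.tsum_eq,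
    div_eq_mul_inv]

/-- The constant produced by the dyadic decomposition when `t ^ p` is integrated against a measure
of growth exponent `d`: the factor `2 ^ |p|` bounds the oscillation of `t ^ p` on a dyadic shell,
and `1 / (1 - 2 ^ (-(d + p)))` is the sum of the geometric series over the shells. -/
noncomputable def dyadicConst (d p : ℝ) : ℝ :=
  2 ^ |p| / (1 - 2 ^ (-(d + p)))

theorem dyadicConst_pos {d p : ℝ} (hdp : 0 < d + p) : 0 < dyadicConst d p :=
  div_pos (by positivity)
    (sub_pos.2 (Real.rpow_lt_one_of_one_lt_of_neg one_lt_two (neg_lt_zero.2 hdp)))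

section Growth

variable {a s d p : ℝ} {K : ℝ≥0∞}

theorem setLIntegral_Icc_rpow_le_of_measure_Icc_le {ν : Measure ℝ} (ha : 0 < a) (has : a ≤ s)
    (hdp : 0 < d + p) (hν : ∀ r ∈ Icc a s, ν (Icc a r) ≤ K * ENNReal.ofReal (r ^ d)) :
    ∫⁻ t in Icc a s, ENNReal.ofReal (t ^ p) ∂ν
      ≤ K * ENNReal.ofReal (dyadicConst d p * s ^ (d + p)) := by
  have hs : 0 < s := ha.trans_le has
  have hshell (k : ℕ) : ν (Icc a (s / 2 ^ k)) ≤ K * ENNReal.ofReal ((s / 2 ^ k) ^ d) := by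
    rcases le_or_gt a (s / 2 ^ k) with hk | hk
    · exact hν _ ⟨hk, div_le_self hs.le (one_le_pow₀ one_le_two)⟩
    · simp [Icc_eq_empty_of_lt hk]
  have hpow (k : ℕ) : ENNReal.ofReal (2 ^ |p| * (s / 2 ^ k) ^ p) * ENNReal.ofReal ((s / 2 ^ k) ^ d)
      = ENNReal.ofReal (2 ^ |p|) * ENNReal.ofReal ((s / 2 ^ k) ^ (d + p)) := by
    rw [← ENNReal.ofReal_mul (by positivity), ← ENNReal.ofReal_mul (by positivity), mul_assoc,
      ← Real.rpow_add (by positivity), add_comm p]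
  calc ∫⁻ t in Icc a s, ENNReal.ofReal (t ^ p) ∂ν
      ≤ ∫⁻ t, ∑' k : ℕ, (Icc a (s / 2 ^ k)).indicator
          (fun _ ↦ ENNReal.ofReal (2 ^ |p| * (s / 2 ^ k) ^ p)) t ∂ν :=
        (setLIntegral_mono' measurableSet_Icc fun _ ht ↦
          ofReal_rpow_le_tsum_indicator_Icc p ha ht).trans (setLIntegral_le_lintegral _ _)
    _ = ∑' k : ℕ, ENNReal.ofReal (2 ^ |p| * (s / 2 ^ k) ^ p) * ν (Icc a (s / 2 ^ k)) := by
        rw [lintegral_tsum fun k ↦ (measurable_const.indicator measurableSet_Icc).aemeasurable]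
        simp_rw [lintegral_indicator_const measurableSet_Icc]
    _ ≤ ∑' k : ℕ, K * (ENNReal.ofReal (2 ^ |p|) * ENNReal.ofReal ((s / 2 ^ k) ^ (d + p))) := by
        refine ENNReal.tsum_le_tsum fun k ↦ ?_
        rw [← hpow, mul_left_comm]
        gcongr
        exact hshell k
    _ = K * ENNReal.ofReal (dyadicConst d p * s ^ (d + p)) := by
        rw [ENNReal.tsum_mul_left, ENNReal.tsum_mul_left, tsum_ofReal_div_two_pow_rpow hs.le hdp,
          ← ENNReal.ofReal_mul (by positivity), dyadicConst, div_mul_eq_mul_div, mul_div_assoc]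

theorem setLIntegral_sum_smul_dirac {ι X : Type*} [MeasurableSpace X] [MeasurableSingletonClass X]
    (w : ι → ℝ≥0∞) (g : ι → X) (f : X → ℝ≥0∞) {S : Set X} (hS : MeasurableSet S) :
    ∫⁻ x in S, f x ∂Measure.sum (fun i ↦ w i • Measure.dirac (g i))
      = ∑' i, (g ⁻¹' S).indicator (fun i ↦ w i * f (g i)) i := by
  rw [← lintegral_indicator hS, lintegral_sum_measure]
  refine tsum_congr fun i ↦ ?_
  rw [lintegral_smul_measure, lintegral_dirac, smul_eq_mul]
  by_cases hi : g i ∈ S <;> simp [hi]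

theorem tsum_indicator_mul_rpow_le {ι : Type*} {w : ι → ℝ≥0∞} {g : ι → ℝ} (ha : 0 < a)
    (has : a ≤ s) (hdp : 0 < d + p)
    (hw : ∀ r ∈ Icc a s, ∑' i, (g ⁻¹' Icc a r).indicator w i ≤ K * ENNReal.ofReal (r ^ d)) :
    ∑' i, (g ⁻¹' Icc a s).indicator (fun i ↦ w i * ENNReal.ofReal (g i ^ p)) i
      ≤ K * ENNReal.ofReal (dyadicConst d p * s ^ (d + p)) := by
  rw [← setLIntegral_sum_smul_dirac w g (fun t ↦ ENNReal.ofReal (t ^ p)) measurableSet_Icc]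
  refine setLIntegral_Icc_rpow_le_of_measure_Icc_le ha has hdp fun r hr ↦ ?_
  rw [← setLIntegral_one, setLIntegral_sum_smul_dirac w g _ measurableSet_Icc]
  simpa only [mul_one] using hw r hr

end Growth

section Kernel

variable {V : Type*} {ρ : V → V → ℝ}

theorem ite_offDiag_eq_indicator_Icc (hρ : ∀ x y, x ≠ y → 1 ≤ ρ x y) (A : V → Prop)
    (F : V × V → ℝ≥0∞) (r : ℝ) (q : V × V) :
    (if A q.1 ∧ q.2 ≠ q.1 ∧ ρ q.1 q.2 ≤ r then F q else 0)
      = ((fun q ↦ ρ q.1 q.2) ⁻¹' Icc 1 r).indicator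
          ({q | A q.1 ∧ q.2 ≠ q.1}.indicator F) q := by
  rw [indicator_indicator, indicator_apply]
  refine if_congr ⟨fun ⟨hA, hne, hr⟩ ↦ ⟨⟨hρ _ _ hne.symm, hr⟩, hA, hne⟩,
    fun ⟨⟨_, hr⟩, hA, hne⟩ ↦ ⟨hA, hne, hr⟩⟩ rfl rfl

theorem tsum_offDiag_div_rpow_le (hρ : ∀ x y, x ≠ y → 1 ≤ ρ x y) {W : V → V → ℝ}
    (hW : ∀ x y, 0 ≤ W x y) (A : V → Prop) {d b s : ℝ} {K : ℝ≥0∞} (hs : 1 ≤ s) (hbd : b < d)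
    (hgrowth : ∀ r ∈ Icc 1 s,
      (∑' q : V × V, if A q.1 ∧ q.2 ≠ q.1 ∧ ρ q.1 q.2 ≤ r then ENNReal.ofReal (W q.1 q.2) else 0)
        ≤ K * ENNReal.ofReal (r ^ d)) :
    (∑' q : V × V, if A q.1 ∧ q.2 ≠ q.1 ∧ ρ q.1 q.2 ≤ s then
        ENNReal.ofReal (W q.1 q.2 / ρ q.1 q.2 ^ b) else 0)
      ≤ K * ENNReal.ofReal (dyadicConst d (-b) * s ^ (d - b)) := by
  simp_rw [ite_offDiag_eq_indicator_Icc hρ A (fun q ↦ ENNReal.ofReal (W q.1 q.2))] at hgrowth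
  have hfactor (q : V × V) (hq : 1 ≤ ρ q.1 q.2) : ENNReal.ofReal (W q.1 q.2 / ρ q.1 q.2 ^ b)
      = ENNReal.ofReal (W q.1 q.2) * ENNReal.ofReal (ρ q.1 q.2 ^ (-b)) := by
    rw [← ENNReal.ofReal_mul (hW _ _), Real.rpow_neg (zero_le_one.trans hq), div_eq_mul_inv]
  rw [sub_eq_add_neg]
  refine le_of_eq_of_le (tsum_congr fun q ↦ ?_)
    (tsum_indicator_mul_rpow_le one_pos hs (by linarith) hgrowth)
  rw [ite_offDiag_eq_indicator_Icc hρ A (fun q ↦ ENNReal.ofReal (W q.1 q.2 / ρ q.1 q.2 ^ b))]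
  refine congrFun (indicator_congr fun q hq ↦ ?_) q
  by_cases hA : A q.1 ∧ q.2 ≠ q.1 <;> simp [hA, hfactor q hq.1]

end Kernel

theorem stmt_17_general (c2 d α : ℝ) (hc2 : 0 < c2) (hα2 : α < 2) :
    ∃ C : ℝ, 0 < C ∧
      ∀ (V1 : Type*) (ρ : V1 → V1 → ℝ) (z0 : V1) (W : V1 → V1 → ℝ) (R0 : ℝ),
        (∀ x y, x ≠ y → 1 ≤ ρ x y) → (∀ x y, 0 ≤ W x y) →
        (∀ R r : ℝ, R0 < R → 1 ≤ r → r ≤ R →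
          (∑' p : V1 × V1,
              if ρ z0 p.1 ≤ R ∧ p.2 ≠ p.1 ∧ ρ p.1 p.2 ≤ r then
                ENNReal.ofReal (W p.1 p.2) else 0)
            ≤ ENNReal.ofReal (c2 * r ^ d * R ^ d)) →
        ∀ N η n : ℝ, 0 < η → η ≤ N → R0 < n * N → 1 ≤ n * η →
          (∑' p : V1 × V1,
              if ρ z0 p.1 ≤ n * N ∧ p.2 ≠ p.1 ∧ ρ p.1 p.2 ≤ n * η then
                ENNReal.ofReal (W p.1 p.2 / ρ p.1 p.2 ^ (d + α - 2)) else 0)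
            ≤ ENNReal.ofReal (C * n ^ (d + 2 - α) * N ^ d * η ^ (2 - α)) := by
  have hC : 0 < dyadicConst d (-(d + α - 2)) := dyadicConst_pos (by linarith)
  refine ⟨c2 * dyadicConst d (-(d + α - 2)), mul_pos hc2 hC, ?_⟩
  intro V1 ρ z0 W R0 hρ hW hbound N η n hη hηN hR hs
  have hn : 0 < n := pos_of_mul_pos_left (one_pos.trans_le hs) hη.le
  have hN : 0 < N := hη.trans_le hηN
  have hgrowth (r : ℝ) (hr : r ∈ Icc 1 (n * η)) :
      (∑' p : V1 × V1, if ρ z0 p.1 ≤ n * N ∧ p.2 ≠ p.1 ∧ ρ p.1 p.2 ≤ r then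
          ENNReal.ofReal (W p.1 p.2) else 0)
        ≤ ENNReal.ofReal (c2 * (n * N) ^ d) * ENNReal.ofReal (r ^ d) := by
    rw [← ENNReal.ofReal_mul (by positivity), mul_right_comm]
    exact hbound _ r hR hr.1 (hr.2.trans (by gcongr))
  refine (tsum_offDiag_div_rpow_le hρ hW (ρ z0 · ≤ n * N) hs (by linarith) hgrowth).trans_eq ?_
  rw [← ENNReal.ofReal_mul (by positivity), Real.mul_rpow hn.le hN.le, Real.mul_rpow hn.le hη.le,
    show d - (d + α - 2) = 2 - α by ring, add_sub_assoc d 2, Real.rpow_add hn]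
  ring_nf

/-- Estimate from the proof of Lemma 5.5: if
`∑_{ρ(0,x) ≤ R, 0 < ρ(x,y) ≤ r} W(x,y) ≤ c₂ r^d R^d` for all `R > R₀` and
`1 ≤ r ≤ R`, then there is `C` depending only on `c₂, d, α` such that for all
`N > 2η > 0` and integers `n ≥ 1` with `nN > R₀` and `nη ≥ 1`,
`∑_{ρ(0,x) ≤ nN, 0 < ρ(x,y) ≤ nη} W(x,y) ρ(x,y)^{−(d+α−2)}
  ≤ C n^{d+2−α} N^d η^{2−α}`. -/
theorem stmt_17
    (c2 d α : ℝ) (hc2 : 0 < c2) (hd : 0 < d) (hα0 : 0 < α) (hα2 : α < 2) :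
    ∃ C : ℝ, 0 < C ∧
      ∀ (V1 : Type) [Countable V1] (ρ : V1 → V1 → ℝ)
        (_hρ_self : ∀ x : V1, ρ x x = 0)
        (_hρ_symm : ∀ x y : V1, ρ x y = ρ y x)
        (_hρ_tri : ∀ x y z : V1, ρ x z ≤ ρ x y + ρ y z)
        (_hρ_sep : ∀ x y : V1, x ≠ y → 1 ≤ ρ x y)
        (z0 : V1)
        (W : V1 → V1 → ℝ)
        (_hW_nonneg : ∀ x y, 0 ≤ W x y)
        (_hW_symm : ∀ x y, W x y = W y x)
        (R0 : ℝ) (_hR0 : 1 ≤ R0)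
        (_hbound : ∀ R r : ℝ, R0 < R → 1 ≤ r → r ≤ R →
          (∑' p : V1 × V1,
              if ρ z0 p.1 ≤ R ∧ p.2 ≠ p.1 ∧ ρ p.1 p.2 ≤ r then
                ENNReal.ofReal (W p.1 p.2) else 0)
            ≤ ENNReal.ofReal (c2 * r ^ d * R ^ d)),
        ∀ (N η : ℝ) (n : ℕ), 0 < η → 2 * η < N → 1 ≤ n →
          R0 < (n : ℝ) * N → 1 ≤ (n : ℝ) * η →
          (∑' p : V1 × V1,
              if ρ z0 p.1 ≤ (n : ℝ) * N ∧ p.2 ≠ p.1 ∧ ρ p.1 p.2 ≤ (n : ℝ) * η then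
                ENNReal.ofReal (W p.1 p.2 / ρ p.1 p.2 ^ (d + α - 2)) else 0)
            ≤ ENNReal.ofReal (C * (n : ℝ) ^ (d + 2 - α) * N ^ d * η ^ (2 - α)) := by
  obtain ⟨C, hC, hbound⟩ := stmt_17_general c2 d α hc2 hα2
  exact ⟨C, hC, fun V1 _ ρ _ _ _ hsep z0 W hW _ R0 _ hsum N η n hη hηN _ hR hs ↦
    hbound V1 ρ z0 W R0 hsep hW hsum N η n hη (by linarith) hR hs⟩
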